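/- Let p ≥ 2 be a real number, let c > 0, and let 0 < λ < c^{p−1}. Then the function g : ℝ → ℝ given by g(α) = (1/p)|c − α|^p + λ|α| attains its unique global minimum at α = c − λ^{1/(p−1)}. -/

import Mathlib

open scoped BigOperators Matrix

attribute [local instance 10] Classical.propDecidable

noncomputable section

/-- The index `t mod m` as an element of `Fin m`. -/
def idx (m : ℕ) [NeZero m] (t : ℤ) : Fin m :=
  ⟨(t % (m : ℤ)).toNat, by
    have hm : 0 < m := Nat.pos_of_ne_zero (NeZero.ne m)
    have hm' : (0 : ℤ) < (m : ℤ) := by exact_mod_cast hm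
    have h1 : 0 ≤ t % (m : ℤ) := Int.emod_nonneg t (ne_of_gt hm')
    have h2 : t % (m : ℤ) < (m : ℤ) := Int.emod_lt_of_pos t hm'
    omega⟩

/-- Cyclic shift: `(cshift τ v) i = v ((i - τ) mod m)`. -/
def cshift {m : ℕ} [NeZero m] (τ : ℤ) (v : Fin m → ℝ) : Fin m → ℝ :=
  fun i => v (idx m ((i : ℤ) - τ))

/-- Zero padding `ι : ℝ^k → ℝ^m`. -/
def pad (k m : ℕ) (a : Fin k → ℝ) : Fin m → ℝ :=
  fun i => if h : (i : ℕ) < k then a ⟨i, h⟩ else 0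

/-- Restriction to the first `k` coordinates, `ι* : ℝ^m → ℝ^k`. -/
def unpad {k m : ℕ} (h : k ≤ m) (v : Fin m → ℝ) : Fin k → ℝ :=
  fun j => v (Fin.castLE h j)

/-- Circulant matrix `C_w` whose `j`-th column is `s_j[w]`. -/
def circ {m : ℕ} [NeZero m] (w : Fin m → ℝ) : Matrix (Fin m) (Fin m) ℝ :=
  Matrix.of fun i j => cshift (j : ℤ) w i

/-- Reversed circulant matrix `Č_{a0}` whose `j`-th column is `s_{-j}[ι a0]`. -/
def rcirc (k m : ℕ) [NeZero m] (a0 : Fin k → ℝ) : Matrix (Fin m) (Fin m) ℝ :=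
  Matrix.of fun i j => cshift (-(j : ℤ)) (pad k m a0) i

/-- Circular convolution `w ⊛ x = C_w x`. -/
def conv {m : ℕ} [NeZero m] (w x : Fin m → ℝ) : Fin m → ℝ := (circ w).mulVec x

def dotp {α : Type*} [Fintype α] (u v : α → ℝ) : ℝ := ∑ i, u i * v i

def l2sq {α : Type*} [Fintype α] (v : α → ℝ) : ℝ := ∑ i, v i ^ 2

def l2norm {α : Type*} [Fintype α] (v : α → ℝ) : ℝ := Real.sqrt (l2sq v)

def l1norm {α : Type*} [Fintype α] (v : α → ℝ) : ℝ := ∑ i, |v i|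

/-- Scalar soft-thresholding. -/
def soft (lam t : ℝ) : ℝ := Real.sign t * max (|t| - lam) 0

/-- Entrywise soft-thresholding `S_λ`. -/
def softvec {m : ℕ} (lam : ℝ) (u : Fin m → ℝ) : Fin m → ℝ := fun i => soft lam (u i)

/-- The shift truncation `ι* s_{-τ}[ι a0] ∈ ℝ^k`. -/
def shiftTrunc {k m : ℕ} [NeZero m] (h : k ≤ m) (a0 : Fin k → ℝ) (τ : Fin m) : Fin k → ℝ :=
  unpad h (cshift (-(τ : ℤ)) (pad k m a0))

/-- The inner objective of the simplified marginal problem. -/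
def phiHatInner (k m : ℕ) [NeZero m] (lam : ℝ) (a0 a : Fin k → ℝ) (x : Fin m → ℝ) : ℝ :=
  l2sq (pad k m a0) / 2 + l2sq x / 2 - dotp (conv (pad k m a) x) (pad k m a0) + lam * l1norm x

/-- The simplified marginal objective `φ̂`. -/
def phiHat (k m : ℕ) [NeZero m] (lam : ℝ) (a0 a : Fin k → ℝ) : ℝ :=
  sInf (Set.range (phiHatInner k m lam a0 a))

/-- Zero-padding `ι` as an `m × k` matrix. -/
def padM (k m : ℕ) : Matrix (Fin m) (Fin k) ℝ :=
  Matrix.of fun i j => if (i : ℕ) = (j : ℕ) then 1 else 0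

/-- The diagonal 0/1 projection matrix `P_I`. -/
def projM {m : ℕ} (I : Set (Fin m)) : Matrix (Fin m) (Fin m) ℝ :=
  Matrix.of fun i j => if i = j ∧ i ∈ I then 1 else 0

/-- The `ℓ² → ℓ²` operator norm of a matrix. -/
def opNorm {α β : Type*} [Fintype α] [Fintype β] (A : Matrix α β ℝ) : ℝ :=
  sSup {c | ∃ v : β → ℝ, l2norm v = 1 ∧ c = l2norm (A.mulVec v)}

/-- The `ℓ² → ℓ∞` operator norm of a matrix. -/
def l2linfNorm {α β : Type*} [Fintype α] [Fintype β] (A : Matrix α β ℝ) : ℝ :=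
  sSup {c | ∃ v : β → ℝ, l2norm v = 1 ∧ c = sSup {d | ∃ i, d = |A.mulVec v i|}}

/-- The smallest eigenvalue of a symmetric matrix, via the Rayleigh quotient. -/
def lamMin {n : ℕ} (A : Matrix (Fin n) (Fin n) ℝ) : ℝ :=
  sInf {c | ∃ v : Fin n → ℝ, l2sq v = 1 ∧ c = dotp v (A.mulVec v)}

/-- `‖v‖_p^p = ∑ |v i|^p` for a real exponent `p`. -/
def lpPow {α : Type*} [Fintype α] (p : ℝ) (v : α → ℝ) : ℝ := ∑ i, |v i| ^ p

/-- The `ℓ^p` norm with real exponent `p`. -/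
def lpNorm {α : Type*} [Fintype α] (p : ℝ) (v : α → ℝ) : ℝ := (lpPow p v) ^ (1 / p)

/-- The continuous linear functional `v ↦ ⟨g, v⟩` on `ℝ^n`. -/
def dotCLM {n : ℕ} (g : Fin n → ℝ) : (Fin n → ℝ) →L[ℝ] ℝ :=
  LinearMap.toContinuousLinearMap
    { toFun := fun v => dotp g v
      map_add' := fun x y => by
        simp [dotp, mul_add, Finset.sum_add_distrib]
      map_smul' := fun c x => by
        simp only [dotp, Pi.smul_apply, smul_eq_mul, RingHom.id_apply, Finset.mul_sum]
        exact Finset.sum_congr rfl fun i _ => by ring }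

/-- `α ↦ (1/p)|c − α|^p + λ|α|` has unique global minimum at
`α = c − λ^{1/(p−1)}` when `0 < λ < c^{p−1}` and `p ≥ 2`. -/
theorem stmt_18 (p : ℝ) (hp : 2 ≤ p) (c lam : ℝ) (hc : 0 < c) (hlam : 0 < lam)
    (hlc : lam < c ^ (p - 1)) :
    ∀ α : ℝ, α ≠ c - lam ^ (1 / (p - 1)) →
      (1 / p) * |c - (c - lam ^ (1 / (p - 1)))| ^ p + lam * |c - lam ^ (1 / (p - 1))|
        < (1 / p) * |c - α| ^ p + lam * |α| := by
  intro α hα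
  set r := lam ^ (1 / (p - 1)) with hr
  have hp1 : 0 < p - 1 := by linarith
  have hp0 : 0 < p := by linarith
  have hr0 : 0 < r := Real.rpow_pos_of_pos hlam _
  have hrl : r ^ (p - 1) = lam := by
    rw [hr, ← Real.rpow_mul hlam.le, one_div_mul_cancel hp1.ne', Real.rpow_one]
  have hrc : r < c := by
    rw [← hrl] at hlc
    exact (Real.rpow_lt_rpow_iff hr0.le hc.le hp1).1 hlc
  have hrp : r ^ p = lam * r := by
    rw [← hrl, ← Real.rpow_add_one hr0.ne']
    congr 1
    ring
  have e1 : |c - (c - r)| = r := by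
    rw [sub_sub_cancel, abs_of_pos hr0]
  rw [e1, abs_of_pos (sub_pos.2 hrc)]
  by_cases hu : |c - α| = r
  · rw [hu]
    have h2 : α = c + r := by
      rcases (abs_eq hr0.le).1 hu with h | h
      · exact absurd (by linarith) hα
      · linarith
    rw [h2, abs_of_pos (by linarith)]
    nlinarith [mul_pos hlam hr0]
  · set u := |c - α| with hu'
    have hu0 : 0 ≤ u := abs_nonneg _
    have hne : u / r - 1 ≠ 0 := by
      intro h
      apply hu
      field_simp at h
      linarith
    have hB := one_add_mul_self_lt_rpow_one_add
      (s := u / r - 1) (by linarith [div_nonneg hu0 hr0.le]) hne (p := p) (by linarith)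
    rw [add_sub_cancel, Real.div_rpow hu0 hr0.le, lt_div_iff₀ (by positivity)] at hB
    have hB2 : (1 + p * (u / r - 1)) * r ^ p = r ^ p + p * (lam * (u - r)) := by
      rw [hrp]
      field_simp
    rw [hB2] at hB
    have h3 : (1 / p) * (r ^ p + p * (lam * (u - r))) < (1 / p) * u ^ p :=
      mul_lt_mul_of_pos_left hB (by positivity)
    have h4 : (1 / p) * (r ^ p + p * (lam * (u - r))) = (1 / p) * r ^ p + lam * (u - r) := by
      field_simp
    have h5 : c ≤ u + |α| := by
      linarith [le_abs_self (c - α), le_abs_self α]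
    nlinarith [mul_le_mul_of_nonneg_left h5 hlam.le]

end
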